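/- arXiv:math/9912126 — 3 statements merged into one kernel-verified Lean document; each statement's English description precedes it below -/
import Mathlib

section
/- Let p be a maximal element of a finite poset P, and suppose that for some fixed k, every maximal chain k-family of P (i.e., every family of k disjoint chains covering the maximum possible number c_k(P) of elements) covers p. Then for every k' ≥ k, every maximal chain k'-family of P covers p. -/
open Finset

/-- `cMax α k` is the maximal cardinality of a union of `k` pairwise disjoint chains
in the finite poset `α`. -/
noncomputable def cMax (α : Type*) [PartialOrder α] [Fintype α] [DecidableEq α] (k : ℕ) : ℕ :=
  sSup {n : ℕ | ∃ f : Fin k → Finset α,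
    (∀ i, IsChain (· ≤ ·) (↑(f i) : Set α)) ∧
    Pairwise (Function.onFun Disjoint f) ∧
    n = (Finset.univ.biUnion f).card}

/-- `aMax α k` is the maximal cardinality of a union of `k` pairwise disjoint antichains
in the finite poset `α`. -/
noncomputable def aMax (α : Type*) [PartialOrder α] [Fintype α] [DecidableEq α] (k : ℕ) : ℕ :=
  sSup {n : ℕ | ∃ f : Fin k → Finset α,
    (∀ i, IsAntichain (· ≤ ·) (↑(f i) : Set α)) ∧
    Pairwise (Function.onFun Disjoint f) ∧
    n = (Finset.univ.biUnion f).card}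

/-- The `k`-th row length of the Greene shape `λ(α)`. -/
noncomputable def lam (α : Type*) [PartialOrder α] [Fintype α] [DecidableEq α] (k : ℕ) : ℕ :=
  cMax α k - cMax α (k - 1)

/-- The `k`-th column length of the Greene shape, `μ_k = a_k - a_{k-1}`. -/
noncomputable def mu (α : Type*) [PartialOrder α] [Fintype α] [DecidableEq α] (k : ℕ) : ℕ :=
  aMax α k - aMax α (k - 1)

/-!
Joining each element of a chain to the next one, and each uncovered element to itself, turns a
chain family into a bijection between subsets of the poset that weakly increases elements. The
number of nonempty chains is the number of elements without a partner, and the uncovered elements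
are the fixed points.

Let `p` be maximal, let `r` come from `k + 1` chains avoiding `p` and `s` from `k` chains covering
`p`. Unless `r` already has at most `k` chains, it has more unpartnered elements than `s`. The graph
`r ∪ s` splits into alternating paths and cycles, so by pigeonhole one of the paths leads from an
unpartnered element of `r` without meeting an unpartnered element of `s`. As `p` is maximal, it has
no partner under `s`, so this path avoids `p`. Interchanging `r` and `s` along the path gives `k`
chains avoiding `p` and `k + 1` further chains, with the same total number of covered elements. If
the given families are maximal, so are the new ones, and a maximal chain `k`-family avoids `p`.
-/

open Relation Relator

section Ends

variable {α β : Type*} [Fintype α]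

open Classical in
/-- The elements without a partner under `r`; for a linking, the tops of its chains. -/
noncomputable def ends (r : α → β → Prop) : Finset α := {x | ∀ y, ¬ r x y}

open Classical in
/-- The elements covered by the chains of a linking `r`, which encodes an uncovered element as one
linked to itself. -/
noncomputable def covered (r : α → α → Prop) : Finset α := {x | ¬ r x x}

@[simp]
theorem mem_ends {r : α → β → Prop} {x : α} : x ∈ ends r ↔ ∀ y, ¬ r x y := by simp [ends]

@[simp]
theorem mem_covered {r : α → α → Prop} {x : α} : x ∈ covered r ↔ ¬ r x x := by simp [covered]

end Ends

section AlternatingPath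

variable {α β : Type*}

theorem reflTransGen_total_of_leftUnique {r : α → α → Prop} (hr : LeftUnique r) {a b c : α}
    (hac : ReflTransGen r a c) (hbc : ReflTransGen r b c) :
    ReflTransGen r a b ∨ ReflTransGen r b a := by
  simpa only [reflTransGen_swap, or_comm] using
    ReflTransGen.total_of_right_unique (r := Function.swap r) (fun _ _ _ h h' ↦ hr h h')
      (reflTransGen_swap.2 hac) (reflTransGen_swap.2 hbc)

/-- `altStep r s x y` leads from `x` to `y` along an edge of `s` and back along an edge of `r`, the
step of an alternating path in the bipartite graph `r ∪ s`. -/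
def altStep (r s : α → β → Prop) (x y : α) : Prop := ∃ z, s x z ∧ r y z

variable {r s : α → β → Prop}

theorem leftUnique_altStep (hr : RightUnique r) (hs : LeftUnique s) :
    LeftUnique (altStep r s) := by
  rintro x x' y ⟨z, hxz, hyz⟩ ⟨z', hxz', hyz'⟩
  obtain rfl := hr hyz hyz'
  exact hs hxz hxz'

variable [Fintype α]

theorem not_altStep_of_mem_ends {a : α} (ha : a ∈ ends r) (x : α) : ¬ altStep r s x a :=
  fun ⟨z, _, haz⟩ ↦ mem_ends.1 ha z haz

theorem eq_of_reflTransGen_altStep {a x : α} (hx : x ∈ ends r)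
    (h : ReflTransGen (altStep r s) a x) : x = a := by
  rcases h.cases_tail with h | ⟨y, -, hyx⟩
  · exact h
  · exact (not_altStep_of_mem_ends hx y hyx).elim

theorem exists_forall_reflTransGen_altStep_notMem_ends (hr : RightUnique r) (hs : LeftUnique s)
    (hcard : #(ends s) < #(ends r)) :
    ∃ a ∈ ends r, ∀ x, ReflTransGen (altStep r s) a x → x ∉ ends s := by
  by_contra! hreach
  refine hcard.not_ge (card_le_card_of_forall_subsingleton (ReflTransGen (altStep r s))
    (fun a ha ↦ (hreach a ha).imp fun _ ↦ And.symm) ?_)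
  rintro b - a ⟨ha, hab⟩ a' ⟨ha', hab'⟩
  rcases reflTransGen_total_of_leftUnique (leftUnique_altStep hr hs) hab hab' with h | h
  · exact (eq_of_reflTransGen_altStep ha' h).symm
  · exact eq_of_reflTransGen_altStep ha h

theorem exists_augmenting_path (hr : RightUnique r) (hs : LeftUnique s)
    (hcard : #(ends s) < #(ends r)) :
    ∃ C : Set α, (∀ ⦃x y z⦄, s x z → r y z → (x ∈ C ↔ y ∈ C)) ∧ (∀ x ∈ C, x ∉ ends s) ∧
      ∃ a, ∀ x, x ∈ C ∧ x ∈ ends r ↔ x = a := by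
  obtain ⟨a, ha, hends⟩ := exists_forall_reflTransGen_altStep_notMem_ends hr hs hcard
  refine ⟨{x | ReflTransGen (altStep r s) a x}, fun x y z hxz hyz ↦ ⟨fun hx ↦ ?_, fun hy ↦ ?_⟩,
    hends, a, fun x ↦ ⟨fun ⟨hax, hx⟩ ↦ eq_of_reflTransGen_altStep hx hax, ?_⟩⟩
  · exact hx.tail ⟨z, hxz, hyz⟩
  · rcases hy.cases_tail with rfl | ⟨x', hx', hstep⟩
    · exact (mem_ends.1 ha z hyz).elim
    · exact leftUnique_altStep hr hs hstep ⟨z, hxz, hyz⟩ ▸ hx'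
  · rintro rfl
    exact ⟨.refl, ha⟩

end AlternatingPath

/-- A linking encodes a family of disjoint chains: each covered element is linked to its successor
in its chain, the top of a chain to nothing, and each uncovered element to itself. -/
structure IsLinking {α : Type*} [LE α] (r : α → α → Prop) : Prop where
  le : ∀ ⦃x y⦄, r x y → x ≤ y
  leftUnique : LeftUnique r
  rightUnique : RightUnique r

section Exchange

variable {α : Type*}

open scoped Classical in
theorem IsLinking.piecewise [LE α] {r s : α → α → Prop} (hr : IsLinking r) (hs : IsLinking s)
    {C : Set α} (hC : ∀ ⦃x y z⦄, r x z → s y z → x ∈ C → y ∈ C) :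
    IsLinking (C.piecewise r s) where
  le x y h := by
    by_cases hx : x ∈ C
    · exact hr.le (by simpa [hx] using h)
    · exact hs.le (by simpa [hx] using h)
  leftUnique x y z hxz hyz := by
    by_cases hx : x ∈ C <;> by_cases hy : y ∈ C <;>
      simp only [Set.piecewise, hx, hy, if_true, if_false] at hxz hyz
    · exact hr.leftUnique hxz hyz
    · exact (hy (hC hxz hyz hx)).elim
    · exact (hx (hC hyz hxz hy)).elim
    · exact hs.leftUnique hxz hyz
  rightUnique x y z hxy hxz := by
    by_cases hx : x ∈ C
    · exact hr.rightUnique (by simpa [hx] using hxy) (by simpa [hx] using hxz)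
    · exact hs.rightUnique (by simpa [hx] using hxy) (by simpa [hx] using hxz)

variable [Fintype α] {r s : α → α → Prop}

open scoped Classical in
theorem mem_ends_piecewise {C : Set α} {x : α} :
    x ∈ ends (C.piecewise r s) ↔ x ∈ C ∧ x ∈ ends r ∨ x ∉ C ∧ x ∈ ends s := by
  by_cases hx : x ∈ C <;> simp [hx]

open scoped Classical in
theorem card_covered_piecewise_add (C : Set α) :
    #(covered (C.piecewise s r)) + #(covered (C.piecewise r s)) =
      #(covered r) + #(covered s) := by
  simp only [covered, card_filter, ← sum_add_distrib]
  refine sum_congr rfl fun x _ ↦ ?_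
  by_cases hx : x ∈ C <;> simp [hx, add_comm]

theorem IsLinking.exchange [LE α] (hr : IsLinking r) (hs : IsLinking s) {k : ℕ}
    (hrk : #(ends r) ≤ k + 1) (hsk : #(ends s) ≤ k) {p : α} (hpr : p ∉ covered r)
    (hps : p ∈ ends s) :
    ∃ r' s' : α → α → Prop, IsLinking r' ∧ IsLinking s' ∧ #(ends r') ≤ k ∧ #(ends s') ≤ k + 1 ∧
      p ∉ covered r' ∧ #(covered r') + #(covered s') = #(covered r) + #(covered s) := by
  classical
  rcases le_or_gt #(ends r) #(ends s) with hle | hlt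
  · exact ⟨r, s, hr, hs, hle.trans hsk, hsk.trans k.le_succ, hpr, rfl⟩
  obtain ⟨C, hC, hCs, a, haC⟩ := exists_augmenting_path hr.rightUnique hs.leftUnique hlt
  have hpC : p ∉ C := fun hp ↦ hCs p hp hps
  have ha : a ∈ C ∧ a ∈ ends r := (haC a).2 rfl
  have hends_r' : ends (C.piecewise s r) ⊆ (ends r).erase a := by
    intro x hx
    rcases mem_ends_piecewise.1 hx with ⟨hxC, hxs⟩ | ⟨hxC, hxr⟩
    · exact (hCs x hxC hxs).elim
    · exact mem_erase.2 ⟨fun hxa ↦ hxC (hxa ▸ ha.1), hxr⟩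
  have hends_s' : ends (C.piecewise r s) ⊆ insert a (ends s) := by
    intro x hx
    rcases mem_ends_piecewise.1 hx with hx | ⟨-, hxs⟩
    · exact mem_insert.2 (.inl ((haC x).1 hx))
    · exact mem_insert_of_mem hxs
  refine ⟨C.piecewise s r, C.piecewise r s,
    hs.piecewise hr fun x y z hxz hyz ↦ (hC hxz hyz).1,
    hr.piecewise hs fun x y z hxz hyz ↦ (hC hyz hxz).2, ?_, ?_, ?_, card_covered_piecewise_add C⟩
  · have := card_le_card hends_r'
    rw [card_erase_of_mem ha.2] at this
    omega
  · exact (card_le_card hends_s').trans ((card_insert_le _ _).trans (Nat.succ_le_succ hsk))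
  · simpa [hpC] using hpr

end Exchange

/-- A chain family: pairwise disjoint chains indexed by `ι`, some of which may be empty. -/
structure IsChainFamily {α ι : Type*} [LE α] (f : ι → Finset α) : Prop where
  isChain : ∀ i, IsChain (· ≤ ·) (f i : Set α)
  disjoint : Pairwise (Function.onFun Disjoint f)

section LinkingOfFamily

variable {α ι : Type*} [PartialOrder α] {f : ι → Finset α}

/-- The linking of a chain family. -/
def familyLink (f : ι → Finset α) (x y : α) : Prop :=
  (x = y ∧ ∀ i, x ∉ f i) ∨ ∃ i, x ∈ f i ∧ IsLeast {z | z ∈ f i ∧ x < z} y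

namespace IsChainFamily

theorem index_unique (hf : IsChainFamily f) {x : α} {i j : ι} (hi : x ∈ f i) (hj : x ∈ f j) :
    i = j :=
  by_contra fun hij ↦ Finset.disjoint_left.1 (hf.disjoint hij) hi hj

theorem lt_or_gt (hf : IsChainFamily f) {i : ι} {x y : α} (hx : x ∈ f i) (hy : y ∈ f i)
    (hne : x ≠ y) : x < y ∨ y < x :=
  (hf.isChain i hx hy hne).imp hne.lt_of_le hne.symm.lt_of_le

theorem leftUnique_familyLink (hf : IsChainFamily f) : LeftUnique (familyLink f) := by
  rintro x y z (⟨rfl, hx⟩ | ⟨i, hxi, hxz⟩) (⟨rfl, hy⟩ | ⟨j, hyj, hyz⟩)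
  · rfl
  · exact (hx j hyz.1.1).elim
  · exact (hy i hxz.1.1).elim
  · obtain rfl := hf.index_unique hxz.1.1 hyz.1.1
    by_contra hne
    rcases hf.lt_or_gt hxi hyj hne with hlt | hlt
    · exact hyz.1.2.not_ge (hxz.2 ⟨hyj, hlt⟩)
    · exact hxz.1.2.not_ge (hyz.2 ⟨hxi, hlt⟩)

theorem rightUnique_familyLink (hf : IsChainFamily f) : RightUnique (familyLink f) := by
  rintro x y z (⟨rfl, hx⟩ | ⟨i, hxi, hxy⟩) (⟨rfl, hx'⟩ | ⟨j, hxj, hxz⟩)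
  · rfl
  · exact (hx j hxj).elim
  · exact (hx' i hxi).elim
  · obtain rfl := hf.index_unique hxi hxj
    exact hxy.unique hxz

theorem isLinking_familyLink (hf : IsChainFamily f) : IsLinking (familyLink f) where
  le := by
    rintro x y (⟨rfl, -⟩ | ⟨i, -, hxy⟩)
    exacts [le_rfl, hxy.1.2.le]
  leftUnique := hf.leftUnique_familyLink
  rightUnique := hf.rightUnique_familyLink

theorem exists_familyLink_of_lt (hf : IsChainFamily f) {i : ι} {x y : α} (hx : x ∈ f i)
    (hy : y ∈ f i) (hxy : x < y) : ∃ z, familyLink f x z := by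
  classical
  obtain ⟨z, hz⟩ := {z ∈ f i | x < z}.exists_minimal ⟨y, mem_filter.2 ⟨hy, hxy⟩⟩
  have hzi := mem_filter.1 hz.prop
  refine ⟨z, .inr ⟨i, hx, hzi, fun w hw ↦ ?_⟩⟩
  exact ((hf.isChain i).total hzi.1 hw.1).elim id (hz.2 (mem_filter.2 hw))

variable [Fintype α] [Fintype ι]

theorem card_ends_familyLink_le (hf : IsChainFamily f) :
    #(ends (familyLink f)) ≤ Fintype.card ι := by
  refine card_le_card_of_forall_subsingleton (fun x i ↦ x ∈ f i) (t := univ) ?_ ?_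
  · intro x hx
    by_contra! hxf
    exact mem_ends.1 hx x (.inl ⟨rfl, fun i ↦ hxf i (mem_univ i)⟩)
  · rintro i - x ⟨hx, hxi⟩ y ⟨hy, hyi⟩
    by_contra hne
    rcases hf.lt_or_gt hxi hyi hne with hlt | hlt
    · exact not_exists.2 (mem_ends.1 hx) (hf.exists_familyLink_of_lt hxi hyi hlt)
    · exact not_exists.2 (mem_ends.1 hy) (hf.exists_familyLink_of_lt hyi hxi hlt)

end IsChainFamily

theorem covered_familyLink [Fintype α] [Fintype ι] [DecidableEq α] (f : ι → Finset α) :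
    covered (familyLink f) = univ.biUnion f := by
  ext x
  simp [familyLink, IsLeast]

end LinkingOfFamily

namespace IsLinking

variable {α : Type*} {r : α → α → Prop}

theorem le_of_reflTransGen [Preorder α] (hr : IsLinking r) {x y : α} (h : ReflTransGen r x y) :
    x ≤ y :=
  reflTransGen_le_of_le (r := (· ≤ ·)) hr.le x y h

theorem le_total_of_reflTransGen [Preorder α] (hr : IsLinking r) {x y z : α}
    (hx : ReflTransGen r x z) (hy : ReflTransGen r y z) : x ≤ y ∨ y ≤ x :=
  (reflTransGen_total_of_leftUnique hr.leftUnique hx hy).imp hr.le_of_reflTransGen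
    hr.le_of_reflTransGen

variable [Fintype α]

theorem end_unique [LE α] (hr : IsLinking r) {x y z : α} (hy : y ∈ ends r) (hz : z ∈ ends r)
    (hxy : ReflTransGen r x y) (hxz : ReflTransGen r x z) : y = z := by
  rcases hxy.total_of_right_unique hr.rightUnique hxz with h | h
  · exact ((reflTransGen_iff_eq (mem_ends.1 hy)).1 h).symm
  · exact (reflTransGen_iff_eq (mem_ends.1 hz)).1 h

theorem mem_covered_of_reflTransGen [LE α] (hr : IsLinking r) {x y : α} (hy : y ∈ ends r)
    (hxy : ReflTransGen r x y) : x ∈ covered r := by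
  induction hxy using ReflTransGen.head_induction_on with
  | refl => exact mem_covered.2 (mem_ends.1 hy y)
  | head hxz _ hz =>
    refine mem_covered.2 fun hxx ↦ mem_covered.1 hz ?_
    obtain rfl := hr.rightUnique hxx hxz
    exact hxx

theorem exists_mem_ends_reflTransGen [PartialOrder α] (hr : IsLinking r) {x : α}
    (hx : x ∈ covered r) : ∃ y ∈ ends r, ReflTransGen r x y := by
  induction x using WellFoundedGT.induction with
  | ind x ih =>
    by_cases hend : x ∈ ends r
    · exact ⟨x, hend, .refl⟩
    obtain ⟨y, hxy⟩ : ∃ y, r x y := by simpa using hend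
    have hne : x ≠ y := by
      rintro rfl
      exact mem_covered.1 hx hxy
    have hy : y ∈ covered r := mem_covered.2 fun hyy ↦ hne (hr.leftUnique hxy hyy)
    obtain ⟨z, hz, hyz⟩ := ih y ((hr.le hxy).lt_of_ne hne) hy
    exact ⟨z, hz, hyz.head hxy⟩

theorem mem_ends_of_isMax [PartialOrder α] (hr : IsLinking r) {p : α} (hp : IsMax p)
    (hpr : p ∈ covered r) : p ∈ ends r :=
  mem_ends.2 fun y hpy ↦ mem_covered.1 hpr (by rwa [← hp.eq_of_le (hr.le hpy)] at hpy)

theorem exists_isChainFamily [PartialOrder α] [DecidableEq α] (hr : IsLinking r) {k : ℕ}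
    (hk : #(ends r) ≤ k) :
    ∃ f : Fin k → Finset α, IsChainFamily f ∧ univ.biUnion f = covered r := by
  classical
  obtain ⟨e⟩ : Nonempty (ends r ↪ Fin k) := Function.Embedding.nonempty_of_card_le
    (by rwa [Fintype.card_coe, Fintype.card_fin])
  refine ⟨fun i ↦ {x | ∃ y, e y = i ∧ ReflTransGen r x y}, ⟨fun i ↦ ?_, fun i j hij ↦ ?_⟩, ?_⟩
  · intro x hx x' hx' _
    obtain ⟨y, rfl, hxy⟩ := (mem_filter.1 hx).2
    obtain ⟨y', hy', hxy'⟩ := (mem_filter.1 hx').2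
    obtain rfl := e.injective hy'
    exact hr.le_total_of_reflTransGen hxy hxy'
  · refine Finset.disjoint_left.2 fun x hi hj ↦ hij ?_
    obtain ⟨y, rfl, hxy⟩ := (mem_filter.1 hi).2
    obtain ⟨z, rfl, hxz⟩ := (mem_filter.1 hj).2
    rw [Subtype.ext (hr.end_unique y.2 z.2 hxy hxz)]
  · ext x
    simp only [mem_biUnion, mem_filter, mem_univ, true_and]
    constructor
    · rintro ⟨_, y, -, hxy⟩
      exact hr.mem_covered_of_reflTransGen y.2 hxy
    · intro hx
      obtain ⟨y, hy, hxy⟩ := hr.exists_mem_ends_reflTransGen hx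
      exact ⟨e ⟨y, hy⟩, ⟨y, hy⟩, rfl, hxy⟩

end IsLinking

section MaximalFamilies

variable {α : Type*} [PartialOrder α] [DecidableEq α] {k : ℕ} {p : α}

theorem IsChainFamily.exchange [Finite α] {f : Fin (k + 1) → Finset α} (hf : IsChainFamily f)
    {g : Fin k → Finset α} (hg : IsChainFamily g) (hp : IsMax p) (hpf : p ∉ univ.biUnion f)
    (hpg : p ∈ univ.biUnion g) :
    ∃ (f' : Fin k → Finset α) (g' : Fin (k + 1) → Finset α), IsChainFamily f' ∧ IsChainFamily g' ∧
      p ∉ univ.biUnion f' ∧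
      #(univ.biUnion f') + #(univ.biUnion g') = #(univ.biUnion f) + #(univ.biUnion g) := by
  cases nonempty_fintype α
  rw [← covered_familyLink] at hpf hpg
  obtain ⟨r, s, hr, hs, hrk, hsk, hpr, hcard⟩ :=
    hf.isLinking_familyLink.exchange hg.isLinking_familyLink
      (by simpa using hf.card_ends_familyLink_le) (by simpa using hg.card_ends_familyLink_le)
      hpf (hg.isLinking_familyLink.mem_ends_of_isMax hp hpg)
  obtain ⟨f', hf', hf'r⟩ := hr.exists_isChainFamily hrk
  obtain ⟨g', hg', hg's⟩ := hs.exists_isChainFamily hsk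
  simp only [covered_familyLink] at hcard
  exact ⟨f', g', hf', hg', hf'r ▸ hpr, by rw [hf'r, hg's, hcard]⟩

theorem bddAbove_card_chainFamily (α : Type*) [LE α] [Finite α] [DecidableEq α] (k : ℕ) :
    BddAbove {n : ℕ | ∃ f : Fin k → Finset α, (∀ i, IsChain (· ≤ ·) (↑(f i) : Set α)) ∧
      Pairwise (Function.onFun Disjoint f) ∧ n = (univ.biUnion f).card} := by
  cases nonempty_fintype α
  refine ⟨Fintype.card α, ?_⟩
  rintro _ ⟨f, -, -, rfl⟩
  exact card_le_univ _

variable [Fintype α]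

theorem IsChainFamily.card_le_cMax {f : Fin k → Finset α} (hf : IsChainFamily f) :
    #(univ.biUnion f) ≤ cMax α k :=
  le_csSup (bddAbove_card_chainFamily α k) ⟨f, hf.isChain, hf.disjoint, rfl⟩

theorem exists_isChainFamily_card_eq_cMax (α : Type*) [PartialOrder α] [Fintype α] [DecidableEq α]
    (k : ℕ) : ∃ f : Fin k → Finset α, IsChainFamily f ∧ #(univ.biUnion f) = cMax α k := by
  obtain ⟨f, hchain, hdisj, hcard⟩ := Nat.sSup_mem
    (by exact ⟨_, fun _ ↦ ∅, by simp, fun _ _ _ ↦ disjoint_bot_left, rfl⟩)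
    (bddAbove_card_chainFamily α k)
  exact ⟨f, ⟨hchain, hdisj⟩, hcard.symm⟩

/-- Every maximal chain `k`-family covers `p`. -/
def MaximalFamiliesCover (p : α) (k : ℕ) : Prop :=
  ∀ f : Fin k → Finset α, IsChainFamily f → #(univ.biUnion f) = cMax α k → p ∈ univ.biUnion f

theorem MaximalFamiliesCover.succ (hp : IsMax p) (hk : MaximalFamiliesCover p k) :
    MaximalFamiliesCover p (k + 1) := by
  intro f hf hfmax
  by_contra hpf
  obtain ⟨g, hg, hgmax⟩ := exists_isChainFamily_card_eq_cMax α k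
  obtain ⟨f', g', hf', hg', hpf', hcard⟩ := hf.exchange hg hp hpf (hk g hg hgmax)
  have hf'max : #(univ.biUnion f') = cMax α k := by
    have := hf'.card_le_cMax
    have := hg'.card_le_cMax
    omega
  exact hpf' (hk f' hf' hf'max)

end MaximalFamilies

theorem maximal_chain_families_keep_covering
    (α : Type*) [PartialOrder α] [Fintype α] [DecidableEq α]
    (p : α) (hp : ∀ x : α, p ≤ x → x = p) (k : ℕ)
    (hcov : ∀ f : Fin k → Finset α,
      (∀ i, IsChain (· ≤ ·) (↑(f i) : Set α)) →
      Pairwise (Function.onFun Disjoint f) →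
      (Finset.univ.biUnion f).card = cMax α k →
      p ∈ Finset.univ.biUnion f) :
    ∀ k' : ℕ, k ≤ k' → ∀ f : Fin k' → Finset α,
      (∀ i, IsChain (· ≤ ·) (↑(f i) : Set α)) →
      Pairwise (Function.onFun Disjoint f) →
      (Finset.univ.biUnion f).card = cMax α k' →
      p ∈ Finset.univ.biUnion f := by
  have hpmax : IsMax p := fun x hx ↦ (hp x hx).le
  have hk : MaximalFamiliesCover p k := fun f hf ↦ hcov f hf.isChain hf.disjoint
  have hcover : ∀ n, k ≤ n → MaximalFamiliesCover p n := by
    intro n hn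
    induction n, hn using Nat.le_induction with
    | base => exact hk
    | succ n _ ih => exact ih.succ hpmax
  exact fun k' hkk' f hchain hdisj ↦ hcover k' hkk' f ⟨hchain, hdisj⟩
end

section
/- (Recursive shape computation, distinct case) Let p_1,...,p_k be all the maximal elements of a finite poset P, and suppose the shapes λ(P - {p_i}) are not all equal. Then λ(P) = ∪_i λ(P - {p_i}), i.e., λ_j(P) = max_i λ_j(P - {p_i}) for every row index j. -/
open Finset

/-!
Deleting a maximal element `p` lowers each `cMax α k` by `0` or `1`. The crux is that this loss is
monotone in `k`, so that the shape of `P - {p}` is the shape of `P` with one box removed, in some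
row `j_p`. Not all the `j_p` coincide, hence every row of `P` keeps its length in some `P - {p}`.

For the monotonicity, encode `k` disjoint chains in `P` as a permutation `F` of the elements and `k`
slots, and `k + 1` disjoint chains in `P - {p}` as a permutation `G`, after adding to `F` an empty
slot `a`. Swapping `F` and `G` on a set invariant under `F⁻¹ * G` preserves the total number of
covered elements. If that set contains `p` but not `a`, it turns `F` into a family of `k` chains
avoiding `p`, and `G` into a family of `k + 1` chains of `P`. A cycle of `F⁻¹ * G` containing both
`p` and `a` can be broken up by relabelling the slots of `G`.
-/

section Permutations

variable {X : Type*}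

theorem perm_apply_mem_iff_of_mapsTo {S : Set X} [Finite S] {τ : Equiv.Perm X}
    (h : Set.MapsTo τ S S) (x : X) : τ x ∈ S ↔ x ∈ S :=
  ⟨fun hx => by simpa using Equiv.Perm.perm_symm_mapsTo_of_mapsTo τ h hx, fun hx => h hx⟩

theorem exists_invariant_set_separating [Finite X] [DecidableEq X] (τ : Equiv.Perm X) {a p : X}
    (hap : a ≠ p) :
    ∃ S : Set X, p ∈ S ∧ a ∉ S ∧
      ((∀ x, τ x ∈ S ↔ x ∈ S) ∨ ∀ x, (Equiv.swap a p * τ) x ∈ S ↔ x ∈ S) := by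
  -- The points reached from `p` before `a` along the cycle of `τ`.
  let S : Set X := {x | Relation.ReflTransGen (fun u v => τ u = v ∧ v ≠ a) p x}
  have hpS : p ∈ S := .refl
  have haS : a ∉ S := fun h => by
    rcases Relation.ReflTransGen.cases_tail h with h | ⟨_, _, _, h⟩
    · exact hap h
    · exact h rfl
  have apply_mem {x} (hx : x ∈ S) (hxa : τ x ≠ a) : τ x ∈ S :=
    Relation.ReflTransGen.tail hx ⟨rfl, hxa⟩
  refine ⟨S, hpS, haS, ?_⟩
  by_cases ha : ∃ x ∈ S, τ x = a
  · right
    have hp : ∀ y ∈ S, τ y ≠ p := by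
      intro y hy hyp
      have hsub : insert a S ⊆ τ '' S := by
        rintro z (rfl | hz)
        · exact ha
        · rcases Relation.ReflTransGen.cases_tail hz with rfl | ⟨w, hw, hwz, _⟩
          · exact ⟨y, hy, hyp⟩
          · exact ⟨w, hw, hwz⟩
      have := Set.ncard_le_ncard hsub
      rw [Set.ncard_image_of_injective _ τ.injective, Set.ncard_insert_of_notMem haS] at this
      omega
    refine perm_apply_mem_iff_of_mapsTo fun y hy => ?_
    rw [Equiv.Perm.mul_apply]
    by_cases hya : τ y = a
    · rwa [hya, Equiv.swap_apply_left]
    · rw [Equiv.swap_apply_of_ne_of_ne hya (hp y hy)]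
      exact apply_mem hy hya
  · exact .inl (perm_apply_mem_iff_of_mapsTo fun x hx => apply_mem hx fun h => ha ⟨x, hx, h⟩)

theorem exists_perm_exchange (F G : Equiv.Perm X) {S : Set X}
    (hS : ∀ x, (F⁻¹ * G) x ∈ S ↔ x ∈ S) :
    ∃ F' G' : Equiv.Perm X, (∀ x ∈ S, F' x = G x ∧ G' x = F x) ∧
      ∀ x ∉ S, F' x = F x ∧ G' x = G x := by
  classical
  let ρ : Equiv.Perm X := Equiv.Perm.ofSubtype ((F⁻¹ * G).subtypePerm hS)
  have hρ_mem {x} (hx : x ∈ S) : ρ x = (F⁻¹ * G) x :=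
    Equiv.Perm.ofSubtype_apply_of_mem _ hx
  have hρ_notMem {x} (hx : x ∉ S) : ρ x = x := Equiv.Perm.ofSubtype_apply_of_not_mem _ hx
  have hρ_inv {x} (hx : x ∈ S) : ρ⁻¹ x = (G⁻¹ * F) x := by
    rw [Equiv.Perm.inv_eq_iff_eq, hρ_mem ((hS _).1 (by simpa using hx))]
    simp
  refine ⟨F * ρ, G * ρ⁻¹, fun x hx => ⟨?_, ?_⟩, fun x hx => ⟨?_, ?_⟩⟩
  · simp [hρ_mem hx]
  · rw [Equiv.Perm.mul_apply, hρ_inv hx]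
    simp
  · simp [hρ_notMem hx]
  · rw [Equiv.Perm.mul_apply, Equiv.Perm.inv_eq_iff_eq.2 (hρ_notMem hx).symm]

end Permutations

section Routings

variable {α ι : Type*}

/-- A permutation of the elements of a poset together with a set `ι` of slots is a *routing* if it
moves every element to a slot or weakly upwards. A family of disjoint chains indexed by `ι` is
encoded by sending each element of a chain to the next one, its maximum to the slot of the chain
and this slot to its minimum; elements outside the chains and slots of empty chains are fixed. -/
def IsRouting [LE α] (σ : Equiv.Perm (α ⊕ ι)) : Prop :=
  ∀ x y : α, σ (.inl x) = .inl y → x ≤ y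

/-- The elements lying on the chains encoded by a routing. -/
def routed [Fintype α] [DecidableEq α] [DecidableEq ι] (σ : Equiv.Perm (α ⊕ ι)) : Finset α :=
  {x | σ (.inl x) ≠ .inl x}

@[simp]
theorem mem_routed [Fintype α] [DecidableEq α] [DecidableEq ι] {σ : Equiv.Perm (α ⊕ ι)} {x : α} :
    x ∈ routed σ ↔ σ (.inl x) ≠ .inl x := by
  simp [routed]

section Append

variable [DecidableEq α] [DecidableEq ι] {σ : Equiv.Perm (α ⊕ ι)} {x : α} {i : ι}

theorem IsRouting.swap_mul [LE α] (hσ : IsRouting σ) (hx : ∀ y, σ (.inl y) = .inr i → y ≤ x) :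
    IsRouting (Equiv.swap (.inl x) (.inr i) * σ) := by
  intro y z h
  rw [Equiv.Perm.mul_apply, Equiv.swap_apply_eq_iff] at h
  obtain rfl | hzx := eq_or_ne z x
  · exact hx y (by simpa using h)
  · exact hσ y z (by rwa [Equiv.swap_apply_of_ne_of_ne (by simpa using hzx) (by simp)] at h)

theorem routed_swap_mul [Fintype α] (hx : σ (.inl x) = .inl x) :
    routed (Equiv.swap (.inl x) (.inr i) * σ) = insert x (routed σ) := by
  ext y
  rw [mem_routed, Finset.mem_insert, mem_routed, Equiv.Perm.mul_apply, Ne, Equiv.swap_apply_eq_iff]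
  obtain rfl | hyx := eq_or_ne y x
  · simp [hx]
  · rw [Equiv.swap_apply_of_ne_of_ne (by simpa using hyx) (by simp)]
    simp [hyx]

end Append

theorem exists_isRouting_of_isChain [Preorder α] [Fintype α] [DecidableEq α] [DecidableEq ι]
    {f : ι → Set α} (hf : ∀ i, IsChain (· ≤ ·) (f i)) (U : Finset α)
    (hU : ∀ x ∈ U, ∃ i, x ∈ f i) :
    ∃ σ : Equiv.Perm (α ⊕ ι), IsRouting σ ∧ routed σ = U ∧
      (∀ y i, σ (.inl y) = .inr i → y ∈ f i) ∧ ∀ i, f i = ∅ → σ (.inr i) = .inr i := by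
  induction U using Finset.strongInduction with
  | H U ih =>
    obtain rfl | hne := U.eq_empty_or_nonempty
    · exact ⟨1, fun x y h => (Sum.inl_injective h).le, by ext; simp, by simp, by simp⟩
    obtain ⟨x, hxU, hmax⟩ := Finset.exists_maximal hne
    obtain ⟨i, hi⟩ := hU x hxU
    obtain ⟨σ, hσ, hσU, htop, hempty⟩ := ih (U.erase x) (Finset.erase_ssubset hxU)
      fun y hy => hU y (Finset.mem_of_mem_erase hy)
    have hx : σ (.inl x) = .inl x := by
      have := Finset.notMem_erase x U
      rwa [← hσU, mem_routed, not_not] at this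
    have hle : ∀ y, σ (.inl y) = .inr i → y ≤ x := by
      intro y hy
      have hyU : y ∈ U.erase x := by simp [← hσU, hy]
      exact ((hf i).total (htop y i hy) hi).elim id (hmax (Finset.mem_of_mem_erase hyU))
    -- The transposition puts `x` on top of the chain in slot `i`.
    refine ⟨Equiv.swap (.inl x) (.inr i) * σ, hσ.swap_mul hle,
      by rw [routed_swap_mul hx, hσU, Finset.insert_erase hxU], fun y j h => ?_, fun j hj => ?_⟩
    · rw [Equiv.Perm.mul_apply, Equiv.swap_apply_eq_iff] at h
      obtain rfl | hji := eq_or_ne j i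
      · rw [Equiv.swap_apply_right, ← hx] at h
        rwa [Sum.inl_injective (σ.injective h)]
      · rw [Equiv.swap_apply_of_ne_of_ne (by simp) (by simpa using hji)] at h
        exact htop y j h
    · have hji : j ≠ i := by
        rintro rfl
        simp [hj] at hi
      rw [Equiv.Perm.mul_apply, hempty j hj,
        Equiv.swap_apply_of_ne_of_ne (by simp) (by simpa using hji)]

/-- The chain in slot `i` of a routing `σ`: the elements `σ` passes through after leaving `i` and
before returning to a slot. -/
def routingChain (σ : Equiv.Perm (α ⊕ ι)) (i : ι) : Set α :=
  {x | ∃ y, σ (.inr i) = .inl y ∧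
    Relation.ReflTransGen (fun u v => σ (.inl u) = .inl v) y x}

theorem routingChain_eq_empty {σ : Equiv.Perm (α ⊕ ι)} {i : ι} (hi : σ (.inr i) = .inr i) :
    routingChain σ i = ∅ := by
  simp [routingChain, hi]

namespace IsRouting

theorem isChain_routingChain [Preorder α] {σ : Equiv.Perm (α ⊕ ι)} (hσ : IsRouting σ) (i : ι) :
    IsChain (· ≤ ·) (routingChain σ i) := by
  rintro x ⟨u, hu, hux⟩ y ⟨v, hv, hvy⟩ -
  obtain rfl : u = v := Sum.inl_injective (hu.symm.trans hv)
  have le_of_path : ∀ {a b}, Relation.ReflTransGen (fun u v => σ (.inl u) = .inl v) a b → a ≤ b :=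
    fun h => Relation.reflTransGen_le_of_le (r := (· ≤ ·)) hσ _ _ h
  have hunique : Relator.RightUnique fun u v => σ (.inl u) = .inl v :=
    fun _ _ _ h₁ h₂ => Sum.inl_injective (h₁.symm.trans h₂)
  exact (Relation.ReflTransGen.total_of_right_unique hunique hux hvy).imp le_of_path le_of_path

theorem exists_mem_routingChain [PartialOrder α] [WellFoundedLT α] {σ : Equiv.Perm (α ⊕ ι)}
    (hσ : IsRouting σ) {x : α} (hx : σ (.inl x) ≠ .inl x) : ∃ i, x ∈ routingChain σ i := by
  induction x using WellFoundedLT.induction with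
  | ind x ih =>
    obtain ⟨z | i, hz⟩ := σ.surjective (.inl x)
    · have hzx : z ≠ x := by
        rintro rfl
        exact hx hz
      obtain ⟨i, y, hy, hyz⟩ := ih z ((hσ z x hz).lt_of_ne hzx) (by simpa [hz] using hzx.symm)
      exact ⟨i, y, hy, hyz.tail hz⟩
    · exact ⟨i, x, hz, .refl⟩

variable [Fintype α] [DecidableEq α] [DecidableEq ι]

theorem exists_exchange [LE α] {F G : Equiv.Perm (α ⊕ ι)} (hF : IsRouting F) (hG : IsRouting G)
    {S : Set (α ⊕ ι)} (hS : ∀ x, (F⁻¹ * G) x ∈ S ↔ x ∈ S) :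
    ∃ F' G' : Equiv.Perm (α ⊕ ι), IsRouting F' ∧ IsRouting G' ∧
      (∀ x ∈ S, F' x = G x) ∧ (∀ x ∉ S, F' x = F x) ∧
      #(routed F) + #(routed G) = #(routed F') + #(routed G') := by
  classical
  obtain ⟨F', G', hmem, hnotMem⟩ := exists_perm_exchange F G hS
  refine ⟨F', G', fun x y h => ?_, fun x y h => ?_, fun x hx => (hmem x hx).1,
    fun x hx => (hnotMem x hx).1, ?_⟩
  · by_cases hx : Sum.inl x ∈ S
    · exact hG x y ((hmem _ hx).1 ▸ h)
    · exact hF x y ((hnotMem _ hx).1 ▸ h)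
  · by_cases hx : Sum.inl x ∈ S
    · exact hF x y ((hmem _ hx).2 ▸ h)
    · exact hG x y ((hnotMem _ hx).2 ▸ h)
  · simp only [routed, Finset.card_filter, ← Finset.sum_add_distrib]
    refine Finset.sum_congr rfl fun x _ => ?_
    by_cases hx : Sum.inl x ∈ S
    · rw [(hmem _ hx).1, (hmem _ hx).2, add_comm]
    · rw [(hnotMem _ hx).1, (hnotMem _ hx).2]

theorem exists_exchange_of_apply_eq_inr [LE α] [Finite ι] {F G : Equiv.Perm (α ⊕ ι)}
    (hF : IsRouting F) (hG : IsRouting G) {p : α} {a b : ι} (hFp : F (.inl p) = .inr b)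
    (hFa : F (.inr a) = .inr a) (hGp : G (.inl p) = .inl p) :
    ∃ F' G' : Equiv.Perm (α ⊕ ι), IsRouting F' ∧ IsRouting G' ∧
      F' (.inl p) = .inl p ∧ F' (.inr a) = .inr a ∧
      #(routed F) + #(routed G) = #(routed F') + #(routed G') := by
  obtain ⟨S, hpS, haS, hS | hS⟩ :=
    exists_invariant_set_separating (F⁻¹ * G) (Sum.inr_ne_inl : Sum.inr a ≠ Sum.inl p)
  · obtain ⟨F', G', hF', hG', hmem, hnotMem, hcard⟩ := hF.exists_exchange hG hS
    exact ⟨F', G', hF', hG', (hmem _ hpS).trans hGp, (hnotMem _ haS).trans hFa, hcard⟩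
  · -- Relabelling the slots of `G` turns `F⁻¹ * G` into `swap (inr a) (inl p) * (F⁻¹ * G)`.
    let H : Equiv.Perm (α ⊕ ι) := Equiv.swap (.inr a) (.inr b) * G
    have hHG (x y : α) : H (.inl x) = .inl y ↔ G (.inl x) = .inl y := by
      rw [Equiv.Perm.mul_apply, Equiv.swap_apply_eq_iff,
        Equiv.swap_apply_of_ne_of_ne Sum.inl_ne_inr Sum.inl_ne_inr]
    have hH : IsRouting H := fun x y h => hG x y ((hHG x y).1 h)
    have hrouted : routed H = routed G := by
      ext x
      rw [mem_routed, mem_routed, Ne, hHG]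
    have hFH : F⁻¹ * H = Equiv.swap (.inr a) (.inl p) * (F⁻¹ * G) := by
      have : Equiv.swap (.inr a) (.inr b) = F * Equiv.swap (.inr a) (.inl p) * F⁻¹ := by
        rw [← Equiv.swap_apply_apply, hFa, hFp]
      simp only [H, this]
      group
    rw [← hFH] at hS
    obtain ⟨F', G', hF', hG', hmem, hnotMem, hcard⟩ := hF.exists_exchange hH hS
    exact ⟨F', G', hF', hG', (hmem _ hpS).trans ((hHG p p).2 hGp), (hnotMem _ haS).trans hFa,
      hrouted ▸ hcard⟩

end IsRouting

end Routings

section ChainCovers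

variable {α β : Type*} {k : ℕ} {U : Finset α}

/-- The elements of `U` can be covered by `k` chains of the ambient poset, which need be neither
disjoint nor contained in `U`. -/
def IsChainCoverable [LE α] (k : ℕ) (U : Finset α) : Prop :=
  ∃ f : Fin k → Set α, (∀ i, IsChain (· ≤ ·) (f i)) ∧ ∀ x ∈ U, ∃ i, x ∈ f i

namespace IsChainCoverable

variable [LE α] [LE β]

theorem succ (hU : IsChainCoverable k U) : IsChainCoverable (k + 1) U := by
  obtain ⟨f, hf, hfU⟩ := hU
  exact ⟨Fin.cons ∅ f, by simpa [Fin.forall_fin_succ] using hf,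
    by simpa [Fin.exists_fin_succ] using hfU⟩

theorem mono {V : Finset α} (hU : IsChainCoverable k U) (hVU : V ⊆ U) : IsChainCoverable k V :=
  let ⟨f, hf, hfU⟩ := hU
  ⟨f, hf, fun x hx => hfU x (hVU hx)⟩

theorem map (hU : IsChainCoverable k U) (e : α ↪o β) :
    IsChainCoverable k (U.map e.toEmbedding) := by
  obtain ⟨f, hf, hfU⟩ := hU
  refine ⟨fun i => e '' f i, fun i => (hf i).image e, fun x hx => ?_⟩
  obtain ⟨y, hy, rfl⟩ := Finset.mem_map.1 hx
  exact (hfU y hy).imp fun i hi => ⟨y, hi, rfl⟩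

theorem of_map {e : α ↪o β} (hU : IsChainCoverable k (U.map e.toEmbedding)) :
    IsChainCoverable k U := by
  obtain ⟨f, hf, hfU⟩ := hU
  exact ⟨fun i => e ⁻¹' f i, fun i => (hf i).preimage_embedding e,
    fun x hx => hfU (e x) (Finset.mem_map_of_mem _ hx)⟩

end IsChainCoverable

variable [PartialOrder α] [Fintype α] [DecidableEq α]

theorem isChainCoverable_iff_exists_isRouting :
    IsChainCoverable k U ↔ ∃ σ : Equiv.Perm (α ⊕ Fin k), IsRouting σ ∧ routed σ = U := by
  constructor
  · rintro ⟨f, hf, hU⟩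
    obtain ⟨σ, hσ, hσU, -⟩ := exists_isRouting_of_isChain hf U hU
    exact ⟨σ, hσ, hσU⟩
  · rintro ⟨σ, hσ, rfl⟩
    exact ⟨routingChain σ, hσ.isChain_routingChain,
      fun x hx => hσ.exists_mem_routingChain (mem_routed.1 hx)⟩

theorem isChainCoverable_iff_exists_isRouting_succ :
    IsChainCoverable k U ↔
      ∃ σ : Equiv.Perm (α ⊕ Fin (k + 1)), IsRouting σ ∧ σ (.inr 0) = .inr 0 ∧ routed σ = U := by
  constructor
  · rintro ⟨f, hf, hU⟩
    obtain ⟨σ, hσ, hσU, -, hempty⟩ := exists_isRouting_of_isChain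
      (f := (Fin.cons ∅ f : Fin (k + 1) → Set α)) (by simpa [Fin.forall_fin_succ] using hf) U
      (by simpa [Fin.exists_fin_succ] using hU)
    exact ⟨σ, hσ, hempty 0 rfl, hσU⟩
  · rintro ⟨σ, hσ, hσ0, rfl⟩
    refine ⟨fun i => routingChain σ i.succ, fun i => hσ.isChain_routingChain _, fun x hx => ?_⟩
    have := hσ.exists_mem_routingChain (mem_routed.1 hx)
    simpa [Fin.exists_fin_succ, routingChain_eq_empty hσ0] using this

theorem IsChainCoverable.card_le_cMax (hU : IsChainCoverable k U) :
    #U ≤ cMax α k := by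
  classical
  obtain ⟨f, hf, hfU⟩ := hU
  let g : Fin k → Finset α := fun i => {x ∈ U | x ∈ f i}
  have hg : Finset.univ.biUnion (disjointed g) = U := by
    rw [← Finset.sup_eq_biUnion, Fintype.sup_disjointed]
    ext x
    simpa [g, Finset.mem_sup] using hfU x
  refine le_csSup ⟨Fintype.card α, ?_⟩ ⟨disjointed g, fun i => (hf i).mono fun x hx => ?_,
    disjoint_disjointed g, by rw [hg]⟩
  · rintro n ⟨h, -, -, rfl⟩
    exact Finset.card_le_univ _
  · exact (Finset.mem_filter.1 (disjointed_le g i hx)).2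

variable (α k) in
theorem exists_isChainCoverable_card_eq_cMax :
    ∃ U : Finset α, IsChainCoverable k U ∧ #U = cMax α k := by
  obtain ⟨f, hf, -, hcard⟩ : cMax α k ∈ {n : ℕ | ∃ f : Fin k → Finset α,
      (∀ i, IsChain (· ≤ ·) (f i : Set α)) ∧ Pairwise (Function.onFun Disjoint f) ∧
      n = #(Finset.univ.biUnion f)} :=
    Nat.sSup_mem ⟨_, fun _ => ∅, by simp, fun _ _ _ => Finset.disjoint_empty_left _, rfl⟩
      ⟨Fintype.card α, by rintro n ⟨h, -, -, rfl⟩; exact Finset.card_le_univ _⟩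
  exact ⟨_, ⟨fun i => f i, hf, by simp⟩, hcard.symm⟩

end ChainCovers

section CMax

variable {α : Type*} [PartialOrder α] [Fintype α] [DecidableEq α]

variable (α) in
theorem cMax_le_cMax_succ (k : ℕ) : cMax α k ≤ cMax α (k + 1) := by
  obtain ⟨U, hU, hcard⟩ := exists_isChainCoverable_card_eq_cMax α k
  exact hcard ▸ hU.succ.card_le_cMax

variable {p : α} {k : ℕ}

theorem IsChainCoverable.card_le_cMax_erase {U : Finset α} (hU : IsChainCoverable k U)
    (hp : p ∉ U) : #U ≤ cMax {x : α // x ≠ p} k := by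
  have hmap : (U.subtype (· ≠ p)).map (OrderEmbedding.subtype (· ≠ p)).toEmbedding = U :=
    Finset.subtype_map_of_mem fun x hx => ne_of_mem_of_not_mem hx hp
  rw [← hmap] at hU ⊢
  rw [Finset.card_map]
  exact hU.of_map.card_le_cMax

theorem exists_isChainCoverable_card_eq_cMax_erase (p : α) (k : ℕ) :
    ∃ U : Finset α, IsChainCoverable k U ∧ p ∉ U ∧ #U = cMax {x : α // x ≠ p} k := by
  obtain ⟨U, hU, hcard⟩ := exists_isChainCoverable_card_eq_cMax {x : α // x ≠ p} k
  exact ⟨_, hU.map (OrderEmbedding.subtype _), by simp, by rw [Finset.card_map, hcard]⟩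

theorem cMax_erase_le_cMax (p : α) (k : ℕ) : cMax {x : α // x ≠ p} k ≤ cMax α k := by
  obtain ⟨U, hU, -, hcard⟩ := exists_isChainCoverable_card_eq_cMax_erase p k
  exact hcard ▸ hU.card_le_cMax

theorem cMax_le_cMax_erase_add_one (p : α) (k : ℕ) : cMax α k ≤ cMax {x : α // x ≠ p} k + 1 := by
  obtain ⟨U, hU, hcard⟩ := exists_isChainCoverable_card_eq_cMax α k
  have := (hU.mono (U.erase_subset p)).card_le_cMax_erase (Finset.notMem_erase p U)
  have := U.pred_card_le_card_erase (a := p)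
  omega

theorem cMax_add_cMax_erase_succ_le (hp : IsMax p) (k : ℕ) :
    cMax α k + cMax {x : α // x ≠ p} (k + 1) ≤ cMax {x : α // x ≠ p} k + cMax α (k + 1) := by
  obtain ⟨U, hU, hcardU⟩ := exists_isChainCoverable_card_eq_cMax α k
  obtain ⟨V, hV, hpV, hcardV⟩ := exists_isChainCoverable_card_eq_cMax_erase p (k + 1)
  by_cases hpU : p ∈ U
  · obtain ⟨F, hF, hF0, rfl⟩ := isChainCoverable_iff_exists_isRouting_succ.1 hU
    obtain ⟨G, hG, rfl⟩ := isChainCoverable_iff_exists_isRouting.1 hV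
    obtain ⟨b, hb⟩ : ∃ b, F (.inl p) = .inr b := by
      rcases hz : F (.inl p) with z | b
      · rw [mem_routed, hz] at hpU
        exact absurd (congrArg _ (hp.eq_of_le (hF p z hz)).symm) hpU
      · exact ⟨b, rfl⟩
    obtain ⟨F', G', hF', hG', hF'p, hF'0, hcard⟩ :=
      hF.exists_exchange_of_apply_eq_inr hG hb hF0 (by simpa using hpV)
    rw [← hcardU, ← hcardV, hcard]
    refine add_le_add (IsChainCoverable.card_le_cMax_erase ?_ (by simpa using hF'p))
      (IsChainCoverable.card_le_cMax ?_)
    · exact isChainCoverable_iff_exists_isRouting_succ.2 ⟨F', hF', hF'0, rfl⟩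
    · exact isChainCoverable_iff_exists_isRouting.2 ⟨G', hG', rfl⟩
  · rw [← hcardU]
    exact add_le_add (hU.card_le_cMax_erase hpU) (cMax_erase_le_cMax p (k + 1))

theorem cMax_add_cMax_erase_le (hp : IsMax p) {k l : ℕ} (hkl : k ≤ l) :
    cMax α k + cMax {x : α // x ≠ p} l ≤ cMax {x : α // x ≠ p} k + cMax α l := by
  induction l, hkl using Nat.le_induction with
  | base => rw [add_comm]
  | succ l _ ih =>
    have := cMax_add_cMax_erase_succ_le hp l
    omega

end CMax

section Shape

variable {α : Type*} [PartialOrder α] [Fintype α] [DecidableEq α] {p : α}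

theorem lam_erase_le_lam (hp : IsMax p) (j : ℕ) : lam {x : α // x ≠ p} j ≤ lam α j := by
  cases j with
  | zero => simp [lam]
  | succ j =>
    have := cMax_add_cMax_erase_succ_le hp j
    simp only [lam, Nat.add_sub_cancel]
    omega

theorem cMax_eq_of_lam_erase_lt {j : ℕ} (hp : IsMax p) (hj : lam {x : α // x ≠ p} j < lam α j)
    (l : ℕ) : cMax α l = cMax {x : α // x ≠ p} l + if j ≤ l then 1 else 0 := by
  have hle := cMax_erase_le_cMax p
  have hle_add_one := cMax_le_cMax_erase_add_one p
  cases j with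
  | zero => simp [lam] at hj
  | succ j =>
    have hbefore : cMax α j = cMax {x : α // x ≠ p} j := by
      have := cMax_le_cMax_succ {x : α // x ≠ p} j
      grind [lam]
    have hafter : cMax α (j + 1) = cMax {x : α // x ≠ p} (j + 1) + 1 := by
      grind [lam]
    split_ifs with hl
    · have := cMax_add_cMax_erase_le hp hl
      have := hle_add_one l
      omega
    · have := cMax_add_cMax_erase_le hp (Nat.le_of_lt_succ (not_le.1 hl))
      have := hle l
      omega

theorem lam_eq_of_lam_erase_lt {j : ℕ} (hp : IsMax p) (hj : lam {x : α // x ≠ p} j < lam α j)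
    (i : ℕ) : lam α i = lam {x : α // x ≠ p} i + if i = j then 1 else 0 := by
  have hc := cMax_eq_of_lam_erase_lt hp hj
  cases i with
  | zero =>
    have : j ≠ 0 := by
      rintro rfl
      simp [lam] at hj
    simp [lam, this.symm]
  | succ i =>
    have := cMax_le_cMax_succ {x : α // x ≠ p} i
    simp only [lam, Nat.add_sub_cancel, hc]
    grind

end Shape

theorem recursive_shape_distinct_case_general {α : Type*} [PartialOrder α] [Fintype α]
    [DecidableEq α] {ps : Finset α} (hps : ∀ p ∈ ps, IsMax p)
    (hne : ∃ p ∈ ps, ∃ q ∈ ps, ∃ i : ℕ, lam {x : α // x ≠ p} i ≠ lam {x : α // x ≠ q} i) (j : ℕ) :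
    lam α j = ps.sup fun p => lam {x : α // x ≠ p} j := by
  refine le_antisymm ?_ (Finset.sup_le fun p hp => lam_erase_le_lam (hps p hp) j)
  by_contra! hlt
  obtain ⟨p, hp, q, hq, i, hi⟩ := hne
  have hrow (r : α) (hr : r ∈ ps) :
      lam α i = lam {x : α // x ≠ r} i + if i = j then 1 else 0 :=
    lam_eq_of_lam_erase_lt (hps r hr)
      ((Finset.le_sup (f := fun p => lam {x : α // x ≠ p} j) hr).trans_lt hlt) i
  exact hi (Nat.add_right_cancel ((hrow p hp).symm.trans (hrow q hq)))

theorem recursive_shape_distinct_case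
    (α : Type*) [PartialOrder α] [Fintype α] [DecidableEq α]
    (ps : Finset α) (hps : ∀ x : α, x ∈ ps ↔ ∀ y : α, x ≤ y → y = x)
    (hne : ∃ p ∈ ps, ∃ q ∈ ps, ∃ i : ℕ,
      lam {x : α // x ≠ p} i ≠ lam {x : α // x ≠ q} i) :
    ∀ j : ℕ, 1 ≤ j → lam α j = ps.sup (fun p => lam {x : α // x ≠ p} j) := by
  intro j _
  exact recursive_shape_distinct_case_general
    (fun p hp y hpy => ((hps p).1 hp y hpy).le) hne j
end

section
/- Let p_1, p_2 be two maximal elements of a finite poset P with λ(P - {p_1}) = λ(P - {p_2}) = λ(P) - {B}, and λ(P - {p_1, p_2}) = λ(P) - {A, B} for boxes A, B. Then the column index of A is at least the column index of B; i.e., with B removed from row y_B, column x_B = λ_{y_B}(P), and A from row y_A, column x_A of λ(P) - {B}, one has x_A ≥ x_B. -/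
open Finset

/-!
Chain families are encoded as *routings*: injections `f : α → α ⊕ ι` sending an element of a chain
to its successor in that chain, the top of a chain to the label of the chain, and an unused element
to itself. For two routings `f` and `g`, swapping the values of `f` and `g` along an alternating
path preserves the total number of used elements and the total number of chains.

With `c k = cMax P k`, such swaps show that `c` is concave, and also that
`c_P k + c_{P - p₁ - p₂} k' ≤ c_{P - p₁} m + c_{P - p₂} m'` for some `m + m' ≤ k + k'`: if `p₁` and
`p₂` are the tops of two chains of `f`, swap along the path that starts at the label of the chain
of `p₁`.

Now let `c'` belong to `P - p₁`, with the same shape as `P - p₂`, and let `t = λ_{y_A}(P - p₁)`.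
Take `k' = y_A - 1` and `k = max (y_B, k')`, so that removing `A` does not affect `c' k'` while
removing `B` lowers `c k` by one. The line of slope `t` touching the concave `c'` at `k'` bounds
`c' m + c' m'` by `2 c' k' + t (k - k')`, hence `c' k < c' k' + t (k - k')`. This fails if
`t < λ_{y_B}(P)`, since then all of the rows `y_A, …, k` of `P - p₁` have length at least `t`.
-/

section Exchange

variable {L R : Type*}

/-- `AlternatingReach f g r x` says that `x` lies on the path `r, x₁, g x₁, x₂, g x₂, …` with
`f x₁ = r` and `f xᵢ₊₁ = g xᵢ` that alternates between the graphs of the matchings `f` and `g`. -/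
inductive AlternatingReach (f g : L → R) (r : R) : L → Prop
  | start {x : L} : f x = r → AlternatingReach f g r x
  | step {x y : L} : AlternatingReach f g r x → f y = g x → AlternatingReach f g r y

theorem exists_piecewise_injective_notMem_range {f g : L → R} (hf : Function.Injective f)
    (hg : Function.Injective g) {r₁ r₂ : R} (hr : r₁ ≠ r₂) (h₁ : r₁ ∉ Set.range g)
    (h₂ : r₂ ∉ Set.range g) :
    ∃ (S : Set L) (_ : DecidablePred (· ∈ S)),
      Function.Injective (S.piecewise g f) ∧ Function.Injective (S.piecewise f g) ∧
      r₁ ∉ Set.range (S.piecewise g f) ∧ r₂ ∉ Set.range (S.piecewise f g) := by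
  classical
  refine ⟨{x | AlternatingReach f g r₁ x}, inferInstance, ?_, ?_, ?_, ?_⟩
  · exact (Set.injective_piecewise_iff _).2 ⟨hg.injOn, hf.injOn,
      fun x hx y hy hxy => hy (AlternatingReach.step hx hxy.symm)⟩
  · refine (Set.injective_piecewise_iff _).2 ⟨hf.injOn, hg.injOn, ?_⟩
    rintro x (hx | ⟨hz, hx⟩) y hy hxy
    · exact h₁ ⟨y, hxy.symm.trans hx⟩
    · exact hy (hg (hx.symm.trans hxy) ▸ hz)
  · rw [Set.range_piecewise]
    rintro (⟨x, -, hx⟩ | ⟨x, hxS, hx⟩)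
    · exact h₁ ⟨x, hx⟩
    · exact hxS (.start hx)
  · rw [Set.range_piecewise]
    rintro (⟨x, hx | ⟨-, hx⟩, hx'⟩ | ⟨x, -, hx⟩)
    · exact hr (hx.symm.trans hx')
    · exact h₂ ⟨_, hx.symm.trans hx'⟩
    · exact h₂ ⟨x, hx⟩

theorem card_filter_piecewise_add_card_filter_piecewise [Fintype L] (f g : L → R) (S : Set L)
    [DecidablePred (· ∈ S)] (q : L → R → Prop) [∀ x, DecidablePred (q x)] :
    #{x | q x (S.piecewise g f x)} + #{x | q x (S.piecewise f g x)} =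
      #{x | q x (f x)} + #{x | q x (g x)} := by
  simp only [card_filter, ← sum_add_distrib]
  refine sum_congr rfl fun x _ => ?_
  by_cases hx : x ∈ S <;> simp [hx, add_comm]

end Exchange

theorem mem_extend_empty_iff {α ι κ : Type*} (F : ι → Finset α) (φ : ι ↪ κ) {j : κ} {x : α} :
    x ∈ Function.extend φ F (fun _ => ∅) j ↔ ∃ i, φ i = j ∧ x ∈ F i := by
  by_cases hj : ∃ i, φ i = j
  · obtain ⟨i, rfl⟩ := hj
    simp [φ.injective.extend_apply]
  · simp only [Function.extend_apply' _ _ _ hj, notMem_empty, false_iff]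
    exact fun ⟨i, hi, _⟩ => hj ⟨i, hi⟩

/-- The families of pairwise disjoint chains over which the maximum `cMax` is taken, with an
arbitrary index type. -/
structure IsChainFamily_s16 {α ι : Type*} [PartialOrder α] (F : ι → Finset α) : Prop where
  isChain (i : ι) : IsChain (· ≤ ·) (F i : Set α)
  disjoint : Pairwise (Function.onFun Disjoint F)

namespace IsChainFamily_s16

variable {α β ι κ : Type*} [PartialOrder α] [PartialOrder β] {F : ι → Finset α}

theorem eq_of_mem_of_mem (hF : IsChainFamily_s16 F) {i j : ι} {x : α} (hi : x ∈ F i) (hj : x ∈ F j) :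
    i = j :=
  hF.disjoint.eq fun h => disjoint_left.1 h hi hj

theorem map (hF : IsChainFamily_s16 F) (e : α ↪o β) :
    IsChainFamily_s16 fun i => (F i).map e.toEmbedding where
  isChain i := by simpa using (hF.isChain i).image e
  disjoint i j hij := (disjoint_map e.toEmbedding).2 (hF.disjoint hij)

theorem extend (hF : IsChainFamily_s16 F) (φ : ι ↪ κ) :
    IsChainFamily_s16 (Function.extend φ F fun _ => ∅) where
  isChain j x hx y hy _ := by
    obtain ⟨i, hi, hxi⟩ := (mem_extend_empty_iff F φ).1 hx
    obtain ⟨i', hi', hyi'⟩ := (mem_extend_empty_iff F φ).1 hy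
    obtain rfl := φ.injective (hi.trans hi'.symm)
    exact (hF.isChain i).total hxi hyi'
  disjoint j j' hj := by
    refine disjoint_left.2 fun x hx hx' => hj ?_
    obtain ⟨i, hi, hxi⟩ := (mem_extend_empty_iff F φ).1 hx
    obtain ⟨i', hi', hxi'⟩ := (mem_extend_empty_iff F φ).1 hx'
    rw [← hi, ← hi', hF.eq_of_mem_of_mem hxi hxi']

theorem bddAbove_card_biUnion (α : Type*) [PartialOrder α] [Finite α] [DecidableEq α] (k : ℕ) :
    BddAbove {n : ℕ | ∃ F : Fin k → Finset α,
      (∀ i, IsChain (· ≤ ·) (↑(F i) : Set α)) ∧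
      Pairwise (Function.onFun Disjoint F) ∧
      n = (Finset.univ.biUnion F).card} := by
  have := Fintype.ofFinite α
  refine ⟨Fintype.card α, ?_⟩
  rintro n ⟨F, -, -, rfl⟩
  exact card_le_univ _

variable [Fintype α] [DecidableEq α]

theorem card_biUnion_le_cMax [Fintype ι] (hF : IsChainFamily_s16 F) {k : ℕ}
    (hk : Fintype.card ι ≤ k) : #(univ.biUnion F) ≤ cMax α k := by
  obtain ⟨φ⟩ : Nonempty (ι ↪ Fin k) := Function.Embedding.nonempty_of_card_le (by simpa)
  have hunion : univ.biUnion F = univ.biUnion (Function.extend φ F fun _ => ∅) := by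
    ext x
    simp [mem_extend_empty_iff]
  rw [hunion]
  exact le_csSup (bddAbove_card_biUnion α k) ⟨_, (hF.extend φ).isChain, (hF.extend φ).disjoint, rfl⟩

theorem exists_card_biUnion_eq_cMax (α : Type*) [PartialOrder α] [Fintype α] [DecidableEq α]
    (k : ℕ) : ∃ F : Fin k → Finset α, IsChainFamily_s16 F ∧ #(univ.biUnion F) = cMax α k := by
  have hempty : IsChainFamily_s16 fun _ : Fin k => (∅ : Finset α) :=
    ⟨by simp, fun _ _ _ => disjoint_empty_left _⟩
  obtain ⟨F, hchain, hdisj, hcard⟩ := Nat.sSup_mem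
    (by exact ⟨_, _, hempty.isChain, hempty.disjoint, rfl⟩) (bddAbove_card_biUnion α k)
  exact ⟨F, ⟨hchain, hdisj⟩, hcard.symm⟩

end IsChainFamily_s16

/-- A routing encodes a family of disjoint chains labelled by `ι`: an element of a chain is sent
to its successor in the chain or, at the top, to the label of the chain, and an element outside
the chains is sent to itself. -/
structure IsRouting_s16 {α ι : Type*} [PartialOrder α] (f : α → α ⊕ ι) : Prop where
  injective : Function.Injective f
  le_of_eq_inl {x y : α} : f x = Sum.inl y → x ≤ y

/-- The set of elements lying on the chains encoded by a routing. -/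
def routingSupport {α ι : Type*} [Fintype α] [DecidableEq α] [DecidableEq ι] (f : α → α ⊕ ι) :
    Finset α :=
  {x | f x ≠ Sum.inl x}

/-- The set of tops of the (nonempty) chains encoded by a routing. -/
def routingEnds {α ι : Type*} [Fintype α] (f : α → α ⊕ ι) : Finset α :=
  {x | (f x).isRight}

/-- One step along a chain encoded by a routing (or a loop at an unused element). -/
def RoutingStep {α ι : Type*} (f : α → α ⊕ ι) (x y : α) : Prop :=
  f x = Sum.inl y

section RoutingStatistics

variable {α ι : Type*} [Fintype α] {f : α → α ⊕ ι}

theorem eq_of_mem_routingEnds_of_reflTransGen {z w : α} (hz : z ∈ routingEnds f)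
    (h : Relation.ReflTransGen (RoutingStep f) z w) : z = w := by
  rcases h.cases_head with h | ⟨c, hc, -⟩
  · exact h
  · simp [routingEnds, show f z = Sum.inl c from hc] at hz

theorem eq_of_reflTransGen_of_mem_routingEnds {x z w : α}
    (hz : z ∈ routingEnds f) (hw : w ∈ routingEnds f)
    (hxz : Relation.ReflTransGen (RoutingStep f) x z)
    (hxw : Relation.ReflTransGen (RoutingStep f) x w) : z = w := by
  have hunique : Relator.RightUnique (RoutingStep f) :=
    fun _ _ _ h h' => Sum.inl_injective (h.symm.trans h')
  rcases Relation.ReflTransGen.total_of_right_unique hunique hxz hxw with h | h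
  · exact eq_of_mem_routingEnds_of_reflTransGen hz h
  · exact (eq_of_mem_routingEnds_of_reflTransGen hw h).symm

theorem card_routingEnds_piecewise_add (f g : α → α ⊕ ι) (S : Set α) [DecidablePred (· ∈ S)] :
    #(routingEnds (S.piecewise g f)) + #(routingEnds (S.piecewise f g)) =
      #(routingEnds f) + #(routingEnds g) :=
  card_filter_piecewise_add_card_filter_piecewise f g S fun _ r => r.isRight

theorem card_routingSupport_piecewise_add [DecidableEq α] [DecidableEq ι] (f g : α → α ⊕ ι)
    (S : Set α) [DecidablePred (· ∈ S)] :
    #(routingSupport (S.piecewise g f)) + #(routingSupport (S.piecewise f g)) =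
      #(routingSupport f) + #(routingSupport g) :=
  card_filter_piecewise_add_card_filter_piecewise f g S fun x r => r ≠ Sum.inl x

end RoutingStatistics

/-- `FollowsInFamily F x r` says that `r` is what a routing for the chain family `F` assigns to
the element `x` of a chain. -/
def FollowsInFamily {α ι : Type*} [PartialOrder α] (F : ι → Finset α) (x : α) : α ⊕ ι → Prop
  | Sum.inl y => ∃ i, x ∈ F i ∧ IsLeast {z | z ∈ F i ∧ x < z} y
  | Sum.inr i => x ∈ F i ∧ ∀ z ∈ F i, ¬ x < z

namespace IsChainFamily_s16

variable {α ι : Type*} [PartialOrder α] {F : ι → Finset α}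

theorem exists_followsInFamily (hF : IsChainFamily_s16 F) {i : ι} {x : α} (hx : x ∈ F i) :
    ∃ r, FollowsInFamily F x r := by
  by_cases htop : ∀ z ∈ F i, ¬ x < z
  · exact ⟨Sum.inr i, hx, htop⟩
  push Not at htop
  have hfin : {z | z ∈ F i ∧ x < z}.Finite := (F i).finite_toSet.subset fun z hz => hz.1
  obtain ⟨y, hy⟩ := hfin.exists_minimal htop
  refine ⟨Sum.inl y, i, hx, hy.prop, fun z hz => ?_⟩
  exact ((hF.isChain i).total hy.prop.1 hz.1).elim id (hy.le_of_le hz)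

theorem followsInFamily_left_injective (hF : IsChainFamily_s16 F) {x x' : α} {r : α ⊕ ι}
    (hx : FollowsInFamily F x r) (hx' : FollowsInFamily F x' r) : x = x' := by
  obtain ⟨i, hxi, hxi', hxx', hx'x⟩ :
      ∃ i, x ∈ F i ∧ x' ∈ F i ∧ ¬ x < x' ∧ ¬ x' < x := by
    cases r with
    | inl y =>
      obtain ⟨i, hxi, hy⟩ := hx
      obtain ⟨j, hxj, hy'⟩ := hx'
      obtain rfl := hF.eq_of_mem_of_mem hy.1.1 hy'.1.1
      exact ⟨i, hxi, hxj, fun h => (hy.2 ⟨hxj, h⟩).not_gt hy'.1.2,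
        fun h => (hy'.2 ⟨hxi, h⟩).not_gt hy.1.2⟩
    | inr i => exact ⟨i, hx.1, hx'.1, hx.2 x' hx'.1, hx'.2 x hx.1⟩
  exact ((hF.isChain i).total hxi hxi').elim (·.eq_of_not_lt hxx') (·.eq_of_not_lt hx'x |>.symm)

theorem exists_isRouting [Fintype α] [DecidableEq α] [DecidableEq ι] (hF : IsChainFamily_s16 F) :
    ∃ f : α → α ⊕ ι, IsRouting_s16 f ∧ (∀ x, x ∈ routingSupport f ↔ ∃ i, x ∈ F i) ∧
      ∀ x i, f x = Sum.inr i → x ∈ F i := by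
  have hexists : ∀ x, ∃ r, ((∃ i, x ∈ F i) ∧ FollowsInFamily F x r) ∨
      ((∀ i, x ∉ F i) ∧ r = Sum.inl x) := fun x => by
    by_cases hx : ∃ i, x ∈ F i
    · exact (hF.exists_followsInFamily hx.choose_spec).imp fun r hr => .inl ⟨hx, hr⟩
    · exact ⟨_, .inr ⟨not_exists.1 hx, rfl⟩⟩
  choose f hf using hexists
  refine ⟨f, ⟨fun x x' hxx' => ?_, fun {x y} hxy => ?_⟩, fun x => ?_, fun x i hxi => ?_⟩
  · rcases hf x with ⟨-, hx⟩ | ⟨hx, hfx⟩ <;> rcases hf x' with ⟨-, hx'⟩ | ⟨hx', hfx'⟩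
    · exact hF.followsInFamily_left_injective hx (hxx' ▸ hx')
    · rw [hxx', hfx'] at hx
      exact absurd hx.choose_spec.2.1.1 (hx' _)
    · rw [← hxx', hfx] at hx'
      exact absurd hx'.choose_spec.2.1.1 (hx _)
    · exact Sum.inl_injective (hfx.symm.trans (hxx'.trans hfx'))
  · rcases hf x with ⟨-, hx⟩ | ⟨-, hfx⟩
    · rw [hxy] at hx
      exact hx.choose_spec.2.1.2.le
    · exact (Sum.inl_injective (hfx.symm.trans hxy)).le
  · rcases hf x with ⟨hmem, hx⟩ | ⟨hx, hfx⟩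
    · simp only [routingSupport, mem_filter_univ, hmem, iff_true]
      intro hfx
      rw [hfx] at hx
      exact hx.choose_spec.2.1.2.false
    · simp [routingSupport, hfx, hx]
  · rcases hf x with ⟨-, hx⟩ | ⟨-, hfx⟩
    · rw [hxi] at hx
      exact hx.1
    · simp [hfx] at hxi

end IsChainFamily_s16

namespace IsRouting_s16

variable {α ι : Type*} [PartialOrder α] {f g : α → α ⊕ ι}

theorem piecewise (hf : IsRouting_s16 f) (hg : IsRouting_s16 g) {S : Set α} [DecidablePred (· ∈ S)]
    (hinj : Function.Injective (S.piecewise f g)) : IsRouting_s16 (S.piecewise f g) where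
  injective := hinj
  le_of_eq_inl {x y} hxy := by
    by_cases hx : x ∈ S
    · exact hf.le_of_eq_inl (by simpa [hx] using hxy)
    · exact hg.le_of_eq_inl (by simpa [hx] using hxy)

theorem reflTransGen_le (hf : IsRouting_s16 f) {x y : α}
    (h : Relation.ReflTransGen (RoutingStep f) x y) : x ≤ y := by
  induction h with
  | refl => exact le_rfl
  | tail _ h ih => exact ih.trans (hf.le_of_eq_inl h)

theorem le_total_of_reflTransGen (hf : IsRouting_s16 f) {x y z : α}
    (hx : Relation.ReflTransGen (RoutingStep f) x z)
    (hy : Relation.ReflTransGen (RoutingStep f) y z) : x ≤ y ∨ y ≤ x := by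
  have hunique : Relator.RightUnique (Function.swap (RoutingStep f)) :=
    fun _ _ _ h h' => hf.injective (h.trans h'.symm)
  rw [← Relation.reflTransGen_swap] at hx hy
  refine (Relation.ReflTransGen.total_of_right_unique hunique hx hy).symm.imp ?_ ?_ <;>
    exact fun h => hf.reflTransGen_le (Relation.reflTransGen_swap.1 h)

variable [Fintype α]

theorem card_routingEnds_le (hf : IsRouting_s16 f) {L : Finset ι}
    (hL : ∀ x i, f x = Sum.inr i → i ∈ L) : #(routingEnds f) ≤ #L := by
  rw [← card_map (.inr : ι ↪ α ⊕ ι)]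
  refine card_le_card_of_injOn f (fun x hx => ?_) hf.injective.injOn
  obtain ⟨i, hi⟩ := Sum.isRight_iff.1 (mem_filter_univ x |>.1 hx)
  simpa [hi] using hL x i hi

variable [DecidableEq α] [DecidableEq ι]

theorem exists_eq_inr_of_isMax (hf : IsRouting_s16 f) {p : α} (hp : IsMax p)
    (hfp : p ∈ routingSupport f) : ∃ i, f p = Sum.inr i := by
  cases hy : f p with
  | inl y =>
    obtain rfl := hp.eq_of_le (hf.le_of_eq_inl hy)
    simp [routingSupport, hy] at hfp
  | inr i => exact ⟨i, rfl⟩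

theorem exists_mem_routingEnds_reflTransGen (hf : IsRouting_s16 f) {x : α}
    (hx : x ∈ routingSupport f) :
    ∃ z ∈ routingEnds f, Relation.ReflTransGen (RoutingStep f) x z := by
  simp only [routingSupport, routingEnds, mem_filter_univ] at hx ⊢
  induction x using (wellFounded_gt (α := α)).induction with
  | _ x ih =>
    cases hfx : f x with
    | inr i => exact ⟨x, by simp [hfx], .refl⟩
    | inl y =>
      have hxy : x ≠ y := by
        rintro rfl
        exact hx hfx
      obtain ⟨z, hz, hyz⟩ := ih y ((hf.le_of_eq_inl hfx).lt_of_ne hxy)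
        fun h => hxy (hf.injective (hfx.trans h.symm))
      exact ⟨z, hz, .head hfx hyz⟩

variable {β : Type*} [PartialOrder β] [Fintype β] [DecidableEq β]

theorem card_routingSupport_le_cMax (hf : IsRouting_s16 f) (e : β ↪o α)
    (hsupp : (routingSupport f : Set α) ⊆ Set.range e) {k : ℕ} (hk : #(routingEnds f) ≤ k) :
    #(routingSupport f) ≤ cMax β k := by
  classical
  let C : routingEnds f → Finset β := fun z =>
    {b | Relation.ReflTransGen (RoutingStep f) (e b) z}
  have hC : IsChainFamily_s16 C := by
    refine ⟨fun z b hb c hc _ => ?_, fun z w hzw => disjoint_left.2 fun b hz hw => hzw ?_⟩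
    · simp only [C, coe_filter_univ, Set.mem_ofPred_eq] at hb hc
      simpa using hf.le_total_of_reflTransGen hb hc
    · simp only [C, mem_filter_univ] at hz hw
      exact Subtype.ext (eq_of_reflTransGen_of_mem_routingEnds z.2 w.2 hz hw)
  refine le_trans ?_ (hC.card_biUnion_le_cMax (by simpa using hk))
  rw [← card_map e.toEmbedding]
  refine card_le_card fun x hx => ?_
  obtain ⟨b, rfl⟩ := hsupp hx
  obtain ⟨z, hz, hbz⟩ := hf.exists_mem_routingEnds_reflTransGen hx
  exact mem_map_of_mem _ (mem_biUnion.2 ⟨⟨z, hz⟩, mem_univ _, by simpa [C] using hbz⟩)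

theorem exists_card_routingSupport_eq_cMax (e : β ↪o α) {k : ℕ} (φ : Fin k ↪ ι) :
    ∃ f : α → α ⊕ ι, IsRouting_s16 f ∧ (routingSupport f : Set α) ⊆ Set.range e ∧
      #(routingSupport f) = cMax β k ∧ ∀ x i, f x = Sum.inr i → i ∈ Set.range φ := by
  obtain ⟨F, hF, hcard⟩ := IsChainFamily_s16.exists_card_biUnion_eq_cMax β k
  obtain ⟨f, hf, hsupp, hlabel⟩ := ((hF.map e).extend φ).exists_isRouting
  have hmem : ∀ x, x ∈ routingSupport f ↔ ∃ i, ∃ b ∈ F i, e b = x := fun x => by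
    simp [hsupp, mem_extend_empty_iff]
  refine ⟨f, hf, fun x hx => ?_, ?_, fun x i hi => ?_⟩
  · obtain ⟨-, b, -, rfl⟩ := (hmem x).1 hx
    exact ⟨b, rfl⟩
  · rw [← hcard, ← card_map e.toEmbedding]
    congr 1
    ext x
    simp only [hmem, mem_map, mem_biUnion, mem_univ, true_and]
    exact ⟨fun ⟨i, b, hb, h⟩ => ⟨b, ⟨i, hb⟩, h⟩, fun ⟨b, ⟨i, hb⟩, h⟩ => ⟨i, b, hb, h⟩⟩
  · obtain ⟨j, hj, -⟩ := (mem_extend_empty_iff _ φ).1 (hlabel x i hi)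
    exact ⟨j, hj⟩

end IsRouting_s16

section GreeneShape

variable (β : Type*) [PartialOrder β] [Fintype β] [DecidableEq β]

theorem cMax_zero : cMax β 0 = 0 := by
  obtain ⟨F, -, hF⟩ := IsChainFamily_s16.exists_card_biUnion_eq_cMax β 0
  simp [← hF]

theorem cMax_mono : Monotone (cMax β) := fun k l hkl => by
  obtain ⟨F, hF, hcard⟩ := IsChainFamily_s16.exists_card_biUnion_eq_cMax β k
  exact hcard ▸ hF.card_biUnion_le_cMax (by simpa)

theorem cMax_add_two_add_cMax_le (k : ℕ) : cMax β (k + 2) + cMax β k ≤ 2 * cMax β (k + 1) := by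
  let e : β ↪o β := RelEmbedding.refl _
  obtain ⟨f, hf, -, hfcard, -⟩ :=
    IsRouting_s16.exists_card_routingSupport_eq_cMax e (Function.Embedding.refl (Fin (k + 2)))
  obtain ⟨g, hg, -, hgcard, hglabel⟩ :=
    IsRouting_s16.exists_card_routingSupport_eq_cMax e (Fin.castAddEmb (n := k) 2)
  have hgfree (i : Fin 2) : Sum.inr (Fin.natAdd k i) ∉ Set.range g := by
    rintro ⟨x, hx⟩
    obtain ⟨j, hj⟩ := hglabel x _ hx
    have hval : (j : ℕ) = k + i := congrArg Fin.val hj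
    omega
  obtain ⟨S, _, hgf, hfg, hgf₀, hfg₁⟩ := exists_piecewise_injective_notMem_range hf.injective
    hg.injective (by simp) (hgfree 0) (hgfree 1)
  have hle {h : β → β ⊕ Fin (k + 2)} (hh : IsRouting_s16 h) {i : Fin (k + 2)}
      (hi : Sum.inr i ∉ Set.range h) : #(routingSupport h) ≤ cMax β (k + 1) := by
    refine hh.card_routingSupport_le_cMax e (fun x _ => ⟨x, rfl⟩) ?_
    refine (hh.card_routingEnds_le (L := {i}ᶜ) fun x j hj => ?_).trans_eq (by simp [card_compl])
    rw [mem_compl, mem_singleton]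
    rintro rfl
    exact hi ⟨x, hj⟩
  have hsum := card_routingSupport_piecewise_add f g S
  have := hle (hg.piecewise hf hgf) hgf₀
  have := hle (hf.piecewise hg hfg) hfg₁
  omega

theorem cMax_succ (k : ℕ) : cMax β (k + 1) = cMax β k + lam β (k + 1) :=
  (Nat.add_sub_of_le (cMax_mono β k.le_succ)).symm

theorem lam_succ_antitone : Antitone fun k => lam β (k + 1) :=
  antitone_nat_of_succ_le fun k => by
    have := cMax_add_two_add_cMax_le β k
    have := cMax_succ β k
    have : cMax β (k + 2) = _ := cMax_succ β (k + 1)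
    omega

theorem cMax_add (a d : ℕ) : cMax β (a + d) = cMax β a + ∑ j ∈ range d, lam β (a + j + 1) := by
  induction d with
  | zero => simp
  | succ d ih => rw [← add_assoc, cMax_succ, ih, sum_range_succ, add_assoc]

variable {β}

theorem cMax_add_le_of_lam_le {a t : ℕ} (h : lam β (a + 1) ≤ t) (d : ℕ) :
    cMax β (a + d) ≤ cMax β a + d * t := by
  rw [cMax_add, add_le_add_iff_left]
  simpa using sum_le_card_nsmul (range d) _ t
    fun j _ => (lam_succ_antitone β (a.le_add_right j)).trans h

theorem le_cMax_of_le_lam {k t : ℕ} (h : t ≤ lam β k) {a d : ℕ} (hk : a + d ≤ k) :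
    cMax β a + d * t ≤ cMax β (a + d) := by
  rw [cMax_add, add_le_add_iff_left]
  refine le_trans (by simp) (card_nsmul_le_sum (range d) _ t fun j hj => h.trans ?_)
  obtain ⟨k, rfl⟩ : ∃ l, k = l + 1 := ⟨k - 1, by have := mem_range.1 hj; omega⟩
  exact lam_succ_antitone β (by have := mem_range.1 hj; omega)

theorem cMax_add_mul_lam_le (a m : ℕ) :
    cMax β m + a * lam β (a + 1) ≤ cMax β a + m * lam β (a + 1) := by
  rcases le_total a m with h | h
  · obtain ⟨d, rfl⟩ := Nat.exists_eq_add_of_le h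
    have := cMax_add_le_of_lam_le (le_refl (lam β (a + 1))) d
    linarith
  · obtain ⟨d, rfl⟩ := Nat.exists_eq_add_of_le h
    have := le_cMax_of_le_lam (le_refl (lam β (m + d + 1))) (a := m) (d := d) (by omega)
    linarith

theorem cMax_add_cMax_le_of_lam_le {a k m m' : ℕ} (hm : m + m' ≤ k + a) (hak : a ≤ k)
    (hlam : a < k → lam β (a + 1) ≤ lam β k) : cMax β m + cMax β m' ≤ cMax β k + cMax β a := by
  set t := lam β (a + 1)
  have htangent : cMax β m + a * t ≤ cMax β a + m * t := cMax_add_mul_lam_le a m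
  have htangent' : cMax β m' + a * t ≤ cMax β a + m' * t := cMax_add_mul_lam_le a m'
  have hchord : cMax β a + k * t ≤ cMax β k + a * t := by
    obtain ⟨d, rfl⟩ := Nat.exists_eq_add_of_le hak
    obtain rfl | hd := Nat.eq_zero_or_pos d
    · simp
    · have := le_cMax_of_le_lam (hlam (by omega)) le_rfl
      linarith
  have : (m + m') * t ≤ (k + a) * t := Nat.mul_le_mul_right t hm
  linarith

theorem cMax_add_ite_eq_of_lam_eq {γ : Type*} [PartialOrder γ] [Fintype γ] [DecidableEq γ]
    {y : ℕ} (hy : 1 ≤ y) (hpos : 1 ≤ lam β y)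
    (h : ∀ i, lam γ i = lam β i - if i = y then 1 else 0) (k : ℕ) :
    cMax γ k + (if y ≤ k then 1 else 0) = cMax β k := by
  induction k with
  | zero => simp [cMax_zero, Nat.ne_of_gt hy]
  | succ k ih =>
    rw [cMax_succ, cMax_succ, h, ← ih]
    rcases lt_trichotomy y (k + 1) with hlt | rfl | hgt
    · rw [if_neg hlt.ne', if_pos hlt.le, if_pos (Nat.le_of_lt_succ hlt)]
      omega
    · rw [if_pos le_rfl, if_pos rfl, if_neg (by omega)]
      omega
    · rw [if_neg hgt.ne, if_neg hgt.not_ge, if_neg (by omega)]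
      omega

end GreeneShape

section MaximalElements

variable {α : Type*} [PartialOrder α] [Fintype α] [DecidableEq α]

theorem IsRouting_s16.exists_swap_of_isMax {ι : Type*} [DecidableEq ι] {p₁ p₂ : α} (hne : p₁ ≠ p₂)
    (h₁ : IsMax p₁) (h₂ : IsMax p₂) {f g : α → α ⊕ ι} (hf : IsRouting_s16 f) (hg : IsRouting_s16 g)
    (hdisj : ∀ x y i, f x = Sum.inr i → g y ≠ Sum.inr i)
    (hg₁ : p₁ ∉ routingSupport g) (hg₂ : p₂ ∉ routingSupport g) :
    ∃ f' g' : α → α ⊕ ι, IsRouting_s16 f' ∧ IsRouting_s16 g' ∧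
      p₁ ∉ routingSupport f' ∧ p₂ ∉ routingSupport g' ∧
      #(routingSupport f') + #(routingSupport g') = #(routingSupport f) + #(routingSupport g) ∧
      #(routingEnds f') + #(routingEnds g') = #(routingEnds f) + #(routingEnds g) := by
  by_cases hf₁ : p₁ ∈ routingSupport f
  swap
  · exact ⟨f, g, hf, hg, hf₁, hg₂, rfl, rfl⟩
  by_cases hf₂ : p₂ ∈ routingSupport f
  swap
  · exact ⟨g, f, hg, hf, hg₁, hf₂, add_comm _ _, add_comm _ _⟩
  have hfree {p : α} (hp : IsMax p) (hfp : p ∈ routingSupport f) : f p ∉ Set.range g := by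
    rintro ⟨x, hx⟩
    obtain ⟨i, hi⟩ := hf.exists_eq_inr_of_isMax hp hfp
    exact hdisj p x i hi (hx.trans hi)
  obtain ⟨S, _, hgf, hfg, havoid₁, havoid₂⟩ := exists_piecewise_injective_notMem_range
    hf.injective hg.injective (hf.injective.ne hne) (hfree h₁ hf₁) (hfree h₂ hf₂)
  refine ⟨S.piecewise g f, S.piecewise f g, hg.piecewise hf hgf, hf.piecewise hg hfg, ?_, ?_,
    card_routingSupport_piecewise_add f g S, card_routingEnds_piecewise_add f g S⟩
  · have hp₁ : p₁ ∈ S := by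
      by_contra hp₁
      exact havoid₁ ⟨p₁, by simp [hp₁]⟩
    simpa [routingSupport, hp₁] using hg₁
  · have hp₂ : p₂ ∉ S := fun hp₂ => havoid₂ ⟨p₂, by simp [hp₂]⟩
    simpa [routingSupport, hp₂] using hg₂

theorem exists_cMax_add_cMax_le {p₁ p₂ : α} (hne : p₁ ≠ p₂) (h₁ : IsMax p₁) (h₂ : IsMax p₂)
    (k k' : ℕ) : ∃ m m', m + m' ≤ k + k' ∧
      cMax α k + cMax {x : α // x ≠ p₁ ∧ x ≠ p₂} k' ≤
        cMax {x : α // x ≠ p₁} m + cMax {x : α // x ≠ p₂} m' := by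
  obtain ⟨f, hf, -, hfcard, hflabel⟩ := IsRouting_s16.exists_card_routingSupport_eq_cMax
    (RelEmbedding.refl (α := α) (· ≤ ·)) (.inl : Fin k ↪ Fin k ⊕ Fin k')
  obtain ⟨g, hg, hgsupp, hgcard, hglabel⟩ := IsRouting_s16.exists_card_routingSupport_eq_cMax
    (OrderEmbedding.subtype fun x => x ≠ p₁ ∧ x ≠ p₂) (.inr : Fin k' ↪ Fin k ⊕ Fin k')
  have hgmem (x) (hx : x ∈ routingSupport g) : x ≠ p₁ ∧ x ≠ p₂ := by
    obtain ⟨b, rfl⟩ := hgsupp hx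
    exact b.2
  obtain ⟨f', g', hf', hg', hf'₁, hg'₂, hsupp, hends⟩ :=
    hf.exists_swap_of_isMax hne h₁ h₂ hg
      (fun x y i hx hy => by
        obtain ⟨j, rfl⟩ := hflabel x i hx
        simpa using hglabel y _ hy)
      (fun h => (hgmem _ h).1 rfl) (fun h => (hgmem _ h).2 rfl)
  have hf'le := hf'.card_routingSupport_le_cMax (OrderEmbedding.subtype (· ≠ p₁))
    (fun x hx => ⟨⟨x, fun h => hf'₁ (h ▸ hx)⟩, rfl⟩) le_rfl
  have hg'le := hg'.card_routingSupport_le_cMax (OrderEmbedding.subtype (· ≠ p₂))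
    (fun x hx => ⟨⟨x, fun h => hg'₂ (h ▸ hx)⟩, rfl⟩) le_rfl
  have hfends := hf.card_routingEnds_le (L := univ.map .inl) (by simpa using hflabel)
  have hgends := hg.card_routingEnds_le (L := univ.map .inr) (by simpa using hglabel)
  rw [card_map, card_fin] at hfends hgends
  exact ⟨_, _, hends.trans_le (add_le_add hfends hgends), by omega⟩

end MaximalElements

theorem two_maximal_elements_box_rule
    (α : Type*) [PartialOrder α] [Fintype α] [DecidableEq α]
    (p₁ p₂ : α) (hne : p₁ ≠ p₂)
    (h₁ : ∀ x : α, p₁ ≤ x → x = p₁) (h₂ : ∀ x : α, p₂ ≤ x → x = p₂)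
    (yB yA : ℕ) (hyB : 1 ≤ yB) (hyA : 1 ≤ yA)
    (hBpos : 1 ≤ lam α yB) (hApos : 1 ≤ lam {x : α // x ≠ p₁} yA)
    (hB1 : ∀ i : ℕ, lam {x : α // x ≠ p₁} i = lam α i - (if i = yB then 1 else 0))
    (hB2 : ∀ i : ℕ, lam {x : α // x ≠ p₂} i = lam α i - (if i = yB then 1 else 0))
    (hA : ∀ i : ℕ, lam {x : α // x ≠ p₁ ∧ x ≠ p₂} i
        = lam {x : α // x ≠ p₁} i - (if i = yA then 1 else 0)) :
    lam α yB ≤ lam {x : α // x ≠ p₁} yA := by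
  by_contra! hlt
  obtain ⟨a, rfl⟩ : ∃ a, yA = a + 1 := ⟨yA - 1, by omega⟩
  let k := max yB a
  obtain ⟨m, m', hm, hsub⟩ := exists_cMax_add_cMax_le hne
    (fun x hx => (h₁ x hx).le) (fun x hx => (h₂ x hx).le) k a
  have hrows (hk : a < k) : lam {x : α // x ≠ p₁} (a + 1) ≤ lam {x : α // x ≠ p₁} k := by
    rw [show k = yB by omega, hB1 yB, if_pos rfl]
    exact Nat.le_sub_one_of_lt hlt
  have hconcave := cMax_add_cMax_le_of_lam_le hm (le_max_right yB a) hrows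
  have hremoveB : cMax {x : α // x ≠ p₁} k + 1 = cMax α k := by
    simpa [k] using cMax_add_ite_eq_of_lam_eq hyB hBpos hB1 k
  have hremoveA : cMax {x : α // x ≠ p₁ ∧ x ≠ p₂} a = cMax {x : α // x ≠ p₁} a := by
    simpa using cMax_add_ite_eq_of_lam_eq hyA hApos hA a
  have hshape : cMax {x : α // x ≠ p₁} m' = cMax {x : α // x ≠ p₂} m' :=
    Nat.add_right_cancel <| (cMax_add_ite_eq_of_lam_eq hyB hBpos hB1 m').trans
      (cMax_add_ite_eq_of_lam_eq hyB hBpos hB2 m').symm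
  omega
end
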